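/- Let C be a category with pullbacks and let X be an object of C. Then X is formally unramified if and only if, for every Beck module φ: M → Y in C, the map Hom_C(X, M) → Hom_C(X, Y) given by composition with φ is bijective. -/

import Mathlib

open CategoryTheory CategoryTheory.Limits

universe v u

/-- A Beck module over `Y`: an abelian group object in the overcategory `C/Y`,
presented by its underlying morphism `φ : M ⟶ Y`, a unit (zero) section `unit`,
an addition `add` over `Y`, and a negation `neg` over `Y`, satisfying the abelian
group axioms on generalized elements (equivalently, via Yoneda, making it an
abelian group object of `C/Y`). -/
structure BeckModule {C : Type u} [Category.{v} C] [HasPullbacks C] (Y : C) where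
  M : C
  φ : M ⟶ Y
  unit : Y ⟶ M
  unit_φ : unit ≫ φ = 𝟙 Y
  add : pullback φ φ ⟶ M
  add_φ : add ≫ φ = pullback.fst φ φ ≫ φ
  neg : M ⟶ M
  neg_φ : neg ≫ φ = φ
  add_assoc : ∀ {T : C} (a b c : T ⟶ M) (hab : a ≫ φ = b ≫ φ) (hbc : b ≫ φ = c ≫ φ),
    pullback.lift (pullback.lift a b hab ≫ add) c
        (by rw [Category.assoc, add_φ, ← Category.assoc, pullback.lift_fst, hab, hbc]) ≫ add =
      pullback.lift a (pullback.lift b c hbc ≫ add)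
        (by rw [Category.assoc, add_φ, ← Category.assoc, pullback.lift_fst, hab]) ≫ add
  add_comm : ∀ {T : C} (a b : T ⟶ M) (h : a ≫ φ = b ≫ φ),
    pullback.lift a b h ≫ add = pullback.lift b a h.symm ≫ add
  zero_add : ∀ {T : C} (a : T ⟶ M),
    pullback.lift (a ≫ φ ≫ unit) a
        (by rw [Category.assoc, Category.assoc, unit_φ, Category.comp_id]) ≫ add = a
  add_neg : ∀ {T : C} (a : T ⟶ M),
    pullback.lift a (a ≫ neg) (by rw [Category.assoc, neg_φ]) ≫ add = a ≫ φ ≫ unit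

/-- A Beck torsor structure on `γ : Z ⟶ Y`: `γ` is an effective epimorphism, equipped
with a Beck module `mod` over `Y` and a group action `τ : M ×_Y Z ⟶ Z` in `C/Y`
(satisfying the unit and associativity axioms for an action of the group object `M`),
such that the shear morphism `(τ, π_Z) : M ×_Y Z ⟶ Z ×_Y Z` is an isomorphism in `C/Y`. -/
structure BeckTorsor {C : Type u} [Category.{v} C] [HasPullbacks C] {Z Y : C} (γ : Z ⟶ Y) where
  mod : BeckModule Y
  effEpi : EffectiveEpi γ
  τ : pullback mod.φ γ ⟶ Z
  τ_γ : τ ≫ γ = pullback.snd mod.φ γ ≫ γ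
  act_unit : ∀ {T : C} (z : T ⟶ Z),
    pullback.lift (z ≫ γ ≫ mod.unit) z
        (by rw [Category.assoc, Category.assoc, mod.unit_φ, Category.comp_id]) ≫ τ = z
  act_assoc : ∀ {T : C} (a b : T ⟶ mod.M) (z : T ⟶ Z)
      (hab : a ≫ mod.φ = b ≫ mod.φ) (hbz : b ≫ mod.φ = z ≫ γ),
    pullback.lift (pullback.lift a b hab ≫ mod.add) z
        (by rw [Category.assoc, mod.add_φ, ← Category.assoc, pullback.lift_fst, hab, hbz]) ≫ τ =
      pullback.lift a (pullback.lift b z hbz ≫ τ)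
        (by rw [Category.assoc, τ_γ, ← Category.assoc, pullback.lift_snd, hab, hbz]) ≫ τ
  shear_iso : IsIso (pullback.lift τ (pullback.snd mod.φ γ) τ_γ :
    pullback mod.φ γ ⟶ pullback γ γ)

/-- An object `X` is formally unramified if, for every Beck torsor `γ : Z ⟶ Y` in `C`,
the canonical map `Hom(X, Z) → Hom(X, Y)` given by composition with `γ` is injective. -/
def FormallyUnramified {C : Type u} [Category.{v} C] [HasPullbacks C] (X : C) : Prop :=
  ∀ ⦃Z Y : C⦄ (γ : Z ⟶ Y), BeckTorsor γ →
    Function.Injective (fun ψ : X ⟶ Z => ψ ≫ γ)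

/-!
An action `τ : M ×_Y Z ⟶ Z` has an invertible shear morphism exactly when it is simply transitive
on generalized elements. A Beck module acts simply transitively on itself by translations and its
unit splits `φ`, so it is a torsor over itself and composition with `φ` is always surjective.
Conversely, two morphisms `X ⟶ Z` into a torsor with the same image in `Y` differ by a morphism
`X ⟶ M`; if composition with `φ` is injective, this difference must be zero.
-/

section Shear

variable {C : Type u} [Category.{v} C] {M Z Y : C} {φ : M ⟶ Y} {γ : Z ⟶ Y} [HasPullback φ γ]

theorem exists_eq_pullback_lift {T : C} (p : T ⟶ pullback φ γ) :
    ∃ (a : T ⟶ M) (z : T ⟶ Z) (h : a ≫ φ = z ≫ γ), p = pullback.lift a z h :=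
  ⟨p ≫ pullback.fst φ γ, p ≫ pullback.snd φ γ, by simp only [Category.assoc, pullback.condition],
    by ext <;> simp only [pullback.lift_fst, pullback.lift_snd]⟩

variable [HasPullback γ γ] {τ : pullback φ γ ⟶ Z} (hτ : τ ≫ γ = pullback.snd φ γ ≫ γ)

theorem existsUnique_comp_shear_eq_lift_iff {T : C} {z z' : T ⟶ Z} (h : z' ≫ γ = z ≫ γ) :
    (∃! p, p ≫ pullback.lift τ (pullback.snd φ γ) hτ = pullback.lift z' z h) ↔
      ∃! a : T ⟶ M, ∃ ha : a ≫ φ = z ≫ γ, pullback.lift a z ha ≫ τ = z' := by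
  have comp_eq_iff (p : T ⟶ pullback φ γ) :
      p ≫ pullback.lift τ (pullback.snd φ γ) hτ = pullback.lift z' z h ↔
        p ≫ τ = z' ∧ p ≫ pullback.snd φ γ = z := by
    simp only [pullback.hom_ext_iff, Category.assoc, pullback.lift_fst, pullback.lift_snd]
  simp only [comp_eq_iff]
  constructor
  · rintro ⟨p, ⟨hz', hz⟩, p_unique⟩
    obtain ⟨a, _, ha, rfl⟩ := exists_eq_pullback_lift p
    obtain rfl := (pullback.lift_snd ..).symm.trans hz
    refine ⟨a, ⟨ha, hz'⟩, ?_⟩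
    rintro b ⟨hb, hbz'⟩
    have lift_eq := p_unique (pullback.lift b _ hb) ⟨hbz', pullback.lift_snd ..⟩
    simpa only [pullback.lift_fst] using congrArg (· ≫ pullback.fst φ γ) lift_eq
  · rintro ⟨a, ⟨ha, hz'⟩, a_unique⟩
    refine ⟨pullback.lift a z ha, ⟨hz', pullback.lift_snd ..⟩, ?_⟩
    rintro p ⟨hpz', hpz⟩
    obtain ⟨b, _, hb, rfl⟩ := exists_eq_pullback_lift p
    obtain rfl := (pullback.lift_snd ..).symm.trans hpz
    obtain rfl := a_unique b ⟨hb, hpz'⟩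
    rfl

theorem isIso_shear_iff_existsUnique :
    IsIso (pullback.lift τ (pullback.snd φ γ) hτ) ↔
      ∀ ⦃T : C⦄ ⦃z z' : T ⟶ Z⦄, z' ≫ γ = z ≫ γ →
        ∃! a : T ⟶ M, ∃ ha : a ≫ φ = z ≫ γ, pullback.lift a z ha ≫ τ = z' := by
  simp only [isIso_iff_yoneda_map_bijective, Function.bijective_iff_existsUnique]
  constructor
  · intro shear_bijective T z z' h
    exact (existsUnique_comp_shear_eq_lift_iff hτ h).1 (shear_bijective T _)
  · intro simply_transitive T q
    obtain ⟨z', z, h, rfl⟩ := exists_eq_pullback_lift q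
    exact (existsUnique_comp_shear_eq_lift_iff hτ h).2 (simply_transitive h)

end Shear

namespace BeckModule

variable {C : Type u} [Category.{v} C] [HasPullbacks C] {Y : C} (N : BeckModule Y)

/-- A lift of `t : T ⟶ Y` along `N.φ`, i.e. a morphism from `t` to `N.φ` in `C/Y`. The lifts of `t`
form the abelian group of points of `N` over `t`. -/
@[ext]
structure Lift {T : C} (t : T ⟶ Y) where
  hom : T ⟶ N.M
  hom_φ : hom ≫ N.φ = t

namespace Lift

variable {N} {T : C} {t : T ⟶ Y}

noncomputable instance : Add (N.Lift t) where
  add a b := ⟨pullback.lift a.hom b.hom (a.hom_φ.trans b.hom_φ.symm) ≫ N.add, by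
    rw [Category.assoc, N.add_φ, pullback.lift_fst_assoc, a.hom_φ]⟩

instance : Zero (N.Lift t) where
  zero := ⟨t ≫ N.unit, by rw [Category.assoc, N.unit_φ, Category.comp_id]⟩

instance : Neg (N.Lift t) where
  neg a := ⟨a.hom ≫ N.neg, by rw [Category.assoc, N.neg_φ, a.hom_φ]⟩

theorem hom_add (a b : N.Lift t) :
    (a + b).hom = pullback.lift a.hom b.hom (a.hom_φ.trans b.hom_φ.symm) ≫ N.add :=
  rfl

theorem hom_zero : (0 : N.Lift t).hom = t ≫ N.unit :=
  rfl

theorem hom_neg (a : N.Lift t) : (-a).hom = a.hom ≫ N.neg :=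
  rfl

protected theorem add_assoc (a b c : N.Lift t) : a + b + c = a + (b + c) :=
  Lift.ext (N.add_assoc _ _ _ _ _)

protected theorem add_comm (a b : N.Lift t) : a + b = b + a :=
  Lift.ext (N.add_comm _ _ _)

protected theorem zero_add (a : N.Lift t) : 0 + a = a := by
  obtain ⟨a, rfl⟩ := a
  ext
  simpa only [hom_add, hom_zero, Category.assoc] using N.zero_add a

protected theorem neg_add_cancel (a : N.Lift t) : -a + a = 0 := by
  obtain ⟨a, rfl⟩ := a
  rw [Lift.add_comm]
  ext
  simpa only [hom_add, hom_neg, hom_zero, Category.assoc] using N.add_neg a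

noncomputable instance : AddCommGroup (N.Lift t) where
  __ := AddGroup.ofLeftAxioms Lift.add_assoc Lift.zero_add Lift.neg_add_cancel
  add_comm := Lift.add_comm

end Lift

theorem existsUnique_lift_comp_add_eq {T : C} {b c : T ⟶ N.M} (h : c ≫ N.φ = b ≫ N.φ) :
    ∃! a : T ⟶ N.M, ∃ ha : a ≫ N.φ = b ≫ N.φ, pullback.lift a b ha ≫ N.add = c := by
  let b' : N.Lift (b ≫ N.φ) := ⟨b, rfl⟩
  let c' : N.Lift (b ≫ N.φ) := ⟨c, h⟩
  refine ⟨(c' - b').hom, ⟨(c' - b').hom_φ, congrArg Lift.hom (sub_add_cancel c' b')⟩, ?_⟩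
  rintro a ⟨ha, hc⟩
  have a_add_b : (⟨a, ha⟩ : N.Lift (b ≫ N.φ)) + b' = c' := Lift.ext hc
  exact congrArg Lift.hom (eq_sub_of_add_eq a_add_b)

/-- The trivial torsor: `N` acting on itself by translations. -/
noncomputable def trivialTorsor : BeckTorsor N.φ where
  mod := N
  effEpi :=
    have : IsSplitEpi N.φ := .mk' ⟨N.unit, N.unit_φ⟩
    inferInstance
  τ := N.add
  τ_γ := N.add_φ.trans pullback.condition
  act_unit := N.zero_add
  act_assoc := N.add_assoc
  shear_iso := (isIso_shear_iff_existsUnique _).2 fun _ _ _ => N.existsUnique_lift_comp_add_eq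

theorem comp_φ_surjective (T : C) : Function.Surjective (fun ψ : T ⟶ N.M => ψ ≫ N.φ) :=
  fun f => ⟨f ≫ N.unit, by simp [N.unit_φ]⟩

end BeckModule

theorem BeckTorsor.comp_injective_of_comp_φ_injective {C : Type u} [Category.{v} C]
    [HasPullbacks C] {Z Y : C} {γ : Z ⟶ Y} (t : BeckTorsor γ) {T : C}
    (hφ : Function.Injective (fun a : T ⟶ t.mod.M => a ≫ t.mod.φ)) :
    Function.Injective (fun z : T ⟶ Z => z ≫ γ) := by
  intro z' z h
  obtain ⟨a, ⟨ha, a_act_z⟩, -⟩ := (isIso_shear_iff_existsUnique t.τ_γ).1 t.shear_iso h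
  obtain rfl : a = z ≫ γ ≫ t.mod.unit := hφ (by simp [ha, t.mod.unit_φ])
  exact a_act_z.symm.trans (t.act_unit z)

/-- Theorem 3.3: `X` is formally unramified if and only if, for every Beck module
`φ : M ⟶ Y` in `C`, composition with `φ` is a bijection `Hom(X, M) → Hom(X, Y)`. -/
theorem formallyUnramified_iff_beckModule_bijective {C : Type u} [Category.{v} C]
    [HasPullbacks C] (X : C) :
    FormallyUnramified X ↔
      ∀ ⦃Y : C⦄ (N : BeckModule Y),
        Function.Bijective (fun ψ : X ⟶ N.M => ψ ≫ N.φ) := by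
  constructor
  · intro hX Y N
    exact ⟨hX N.φ N.trivialTorsor, N.comp_φ_surjective X⟩
  · intro hX Z Y γ t
    exact t.comp_injective_of_comp_φ_injective (hX t.mod).injective
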